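/- Let η : ℝ → ℝ be smooth and compactly supported. For every s ∈ ℝ and b ∈ ℝ there exists C > 0 (depending on η, s, b) such that for every τ ∈ (0,1] and every f ∈ H^s(𝕋), the sequence (η(nτ) e^{inτ∂_x²} f)_{n∈ℤ} (which has only finitely many nonzero terms) satisfies ‖(η(nτ) e^{inτ∂_x²} f)_n‖_{X^{s,b}_τ} ≤ C ‖f‖_{H^s}. -/

import Mathlib

noncomputable section

open MeasureTheory Complex Filter Topology AddCircle
open scoped ENNReal

abbrev Torus := AddCircle (2 * Real.pi)

instance : Fact (0 < 2 * Real.pi) := ⟨by positivity⟩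

/-- Japanese bracket `⟨x⟩ = (1+|x|²)^{1/2}`. -/
def jbr (x : ℝ) : ℝ := Real.sqrt (1 + x ^ 2)

/-- The Sobolev `H^s` norm on the torus, via Fourier coefficients. -/
def hsNorm (s : ℝ) (f : Torus → ℂ) : ℝ :=
  Real.sqrt (∑' k : ℤ, jbr k ^ (2 * s) * ‖fourierCoeff f k‖ ^ 2)

/-- Membership in `H^s(𝕋)` (as a function): square integrable with finite `H^s` norm. -/
def InHs (s : ℝ) (f : Torus → ℂ) : Prop :=
  MemLp f 2 haarAddCircle ∧ Summable fun k : ℤ => jbr k ^ (2 * s) * ‖fourierCoeff f k‖ ^ 2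

/-- The frequency cutoff `Π_τ`, keeping the Fourier modes `|k| ≤ τ^{-1/2}`. -/
def projC (τ : ℝ) (f : Torus → ℂ) : Torus → ℂ := fun x =>
  ∑' k : ℤ, if |(k : ℝ)| ≤ τ ^ (-(1 : ℝ) / 2) then fourierCoeff f k * fourier k x else 0

/-- The free Schrödinger group `e^{it∂_x²}`, given by the Fourier multiplier `e^{-itk²}`. -/
def schrod (t : ℝ) (f : Torus → ℂ) : Torus → ℂ := fun x =>
  ∑' k : ℤ, Complex.exp (-Complex.I * t * (k : ℂ) ^ 2) * fourierCoeff f k * fourier k x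

/-- Continuity on `I` with values in `L²(𝕋)`. -/
def ContL2On (I : Set ℝ) (u : ℝ → Torus → ℂ) : Prop :=
  (∀ t ∈ I, MemLp (u t) 2 haarAddCircle) ∧
  ∀ t ∈ I, Tendsto (fun t' => eLpNorm (u t' - u t) 2 haarAddCircle) (nhdsWithin t I) (nhds 0)

/-- Continuity on `I` with values in `H^s(𝕋)`. -/
def ContHsOn (s : ℝ) (I : Set ℝ) (u : ℝ → Torus → ℂ) : Prop :=
  (∀ t ∈ I, InHs s (u t)) ∧
  ∀ t ∈ I, Tendsto (fun t' => hsNorm s (u t' - u t)) (nhdsWithin t I) (nhds 0)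

/-- The cubic nonlinearity `|f|² f` (pointwise). -/
def cubic (f : Torus → ℂ) : Torus → ℂ := fun x => (‖f x‖ : ℂ) ^ 2 * f x

/-- The filtered cubic nonlinearity `Π_τ(|Π_τ f|² Π_τ f)`. -/
def projCubic (τ : ℝ) (f : Torus → ℂ) : Torus → ℂ := projC τ (cubic (projC τ f))

/-- `v` is the (global-in-time) mild solution of the projected equation
`i∂_t v = -∂_x² v - μ Π_τ(|Π_τ v|² Π_τ v)`, `v(0) = Π_τ u₀`. -/
def IsProjSolution (μ τ : ℝ) (u₀ : Torus → ℂ) (v : ℝ → Torus → ℂ) : Prop :=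
  ContL2On Set.univ v ∧
  ∀ t : ℝ, ∀ x : Torus,
    v t x = schrod t (projC τ u₀) x
      + Complex.I * μ * ∫ s in (0 : ℝ)..t, schrod (t - s) (projCubic τ (v s)) x

/-- The cubic NLS `i∂_t u = -∂_x² u - μ |u|² u` holds in the sense of space-time
distributions on `(0,T) × 𝕋` (tested against `ψ(t) e^{-ikx}`). -/
def DistribSolOn (μ T : ℝ) (u : ℝ → Torus → ℂ) : Prop :=
  ∀ k : ℤ, ∀ ψ : ℝ → ℂ, ContDiff ℝ (⊤ : ℕ∞) ψ → tsupport ψ ⊆ Set.Ioo 0 T →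
    -Complex.I * ∫ t : ℝ, deriv ψ t * fourierCoeff (u t) k
      = (k : ℂ) ^ 2 * ∫ t : ℝ, ψ t * fourierCoeff (u t) k
        - (μ : ℂ) * ∫ t : ℝ, ψ t * fourierCoeff (cubic (u t)) k

/-- `u ∈ L⁴((0,T) × 𝕋)`. -/
def SpaceTimeL4 (T : ℝ) (u : ℝ → Torus → ℂ) : Prop :=
  MemLp (fun p : ℝ × Torus => u p.1 p.2) 4
    ((volume.restrict (Set.Ioo 0 T)).prod haarAddCircle)

/-- Space-time Fourier transform `ṽ(σ,k)` of `v : ℝ × 𝕋 → ℂ`. -/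
def stFT (v : ℝ → Torus → ℂ) (σ : ℝ) (k : ℤ) : ℂ :=
  ∫ t : ℝ, Complex.exp (-Complex.I * σ * t) * fourierCoeff (v t) k

/-- The (continuous) Bourgain `X^{s,b}` norm, valued in `ℝ≥0∞`. -/
def XcNorm (s b : ℝ) (v : ℝ → Torus → ℂ) : ℝ≥0∞ :=
  (∫⁻ σ : ℝ, ∑' k : ℤ,
      ENNReal.ofReal ((1 + |(k : ℝ)|) ^ (2 * s) * (1 + |σ + (k : ℝ) ^ 2|) ^ (2 * b)
        * ‖stFT v σ k‖ ^ 2)) ^ (1 / 2 : ℝ)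

/-- The restriction norm `‖u‖_{X^{s,b}(T)}` is bounded by `M`: some extension of `u`
from `(0,T)` has `X^{s,b}` norm at most `M`. -/
def XresBounded (s b T : ℝ) (u : ℝ → Torus → ℂ) (M : ℝ≥0∞) : Prop :=
  ∃ v : ℝ → Torus → ℂ, (∀ t ∈ Set.Ioo 0 T, v t = u t) ∧ XcNorm s b v ≤ M

/-- `u` is a Bourgain-class solution of cubic NLS on `[0,T]` with datum `u₀`. -/
def IsNLSSolution (μ T : ℝ) (u₀ : Torus → ℂ) (u : ℝ → Torus → ℂ) : Prop :=
  ContL2On (Set.Icc 0 T) u ∧ SpaceTimeL4 T u ∧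
  (∃ b ∈ Set.Ioo (1 / 2 : ℝ) (5 / 8 : ℝ), ∃ v : ℝ → Torus → ℂ,
      (∀ t ∈ Set.Ioo 0 T, v t = u t) ∧ XcNorm 0 b v < ⊤) ∧
  u 0 = u₀ ∧ DistribSolOn μ T u

/-- One step of the pointwise nonlinear flow `e^{iμτ|Π_τ f|²} Π_τ f`. -/
def lieFlow (μ τ : ℝ) (f : Torus → ℂ) : Torus → ℂ := fun x =>
  Complex.exp (Complex.I * μ * τ * (‖projC τ f x‖ : ℂ) ^ 2) * projC τ f x

/-- The filtered Lie splitting scheme `u⁰ = Π_τ u₀`,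
`u^{n+1} = e^{iτ∂_x²} Π_τ (e^{iμτ|Π_τ uⁿ|²} Π_τ uⁿ)`. -/
def lieScheme (μ τ : ℝ) (u₀ : Torus → ℂ) : ℕ → Torus → ℂ
  | 0 => projC τ u₀
  | n + 1 => schrod τ (projC τ (lieFlow μ τ (lieScheme μ τ u₀ n)))

/-- `d_τ(σ) = (e^{iτσ}-1)/τ`. -/
def dtau (τ σ : ℝ) : ℂ := (Complex.exp (Complex.I * τ * σ) - 1) / τ

/-- The discrete Bourgain `X^{s,b}_τ` norm of a sequence of functions on the torus. -/
def XdNorm (τ s b : ℝ) (u : ℤ → Torus → ℂ) : ℝ :=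
  Real.sqrt (∫ σ in Set.Ioc (-(Real.pi / τ)) (Real.pi / τ),
    ∑' k : ℤ, jbr k ^ (2 * s) * jbr ‖dtau τ (σ - (k : ℝ) ^ 2)‖ ^ (2 * b) *
      ‖(τ : ℂ) * ∑' m : ℤ, fourierCoeff (u m) k * Complex.exp (Complex.I * m * τ * σ)‖ ^ 2)

/-- The discrete space-time Lebesgue norm `‖(u_n)‖_{ℓ^p_τ L^q}`. -/
def lpLqNorm (τ p q : ℝ) (u : ℤ → Torus → ℂ) : ℝ :=
  (τ * ∑' n : ℤ, (eLpNorm (u n) (ENNReal.ofReal q) haarAddCircle).toReal ^ p) ^ (1 / p)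

/-!
Multiplication of the transform `τ ∑ c_m e^{imτσ}` by `d_τ(σ)` replaces the sequence `c` by its
difference quotients of step `-τ`. If `b ≤ N`, then `⟨d_τ⟩^{2b} ≲ 1 + |d_τ|^{2N}`, so Parseval's
identity bounds the weighted `L²` norm of the transform of `(η(nτ))_n` by the `ℓ²_τ` norms of
`η(nτ)` and of its `N`-th difference quotients. Those are controlled, uniformly in `τ`, by the size
of the support of `η` and the suprema of `|η|` and `|η^{(N)}|`. At spatial frequency `k` the free
evolution only translates the temporal transform by `k²`, which is exactly the shift in the weight,
so the estimate holds with the same constant for every `k` and can be summed.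
-/

section ForwardDifference

lemma support_fwdDiff_iter_subset_closedBall {V G : Type*} [SeminormedAddCommGroup V]
    [AddCommGroup G] {g : V → G} {R : ℝ} (hg : Function.support g ⊆ Metric.closedBall 0 R)
    (h : V) (N : ℕ) :
    Function.support ((fwdDiff h)^[N] g) ⊆ Metric.closedBall 0 (R + N * ‖h‖) := by
  induction N with
  | zero => simpa using hg
  | succ N ih =>
    intro x hx
    rw [Function.iterate_succ_apply', Function.mem_support, fwdDiff] at hx
    rw [mem_closedBall_zero_iff, Nat.cast_succ]
    by_cases hx₀ : (fwdDiff h)^[N] g x = 0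
    · have hxh : ‖x + h‖ ≤ R + N * ‖h‖ :=
        mem_closedBall_zero_iff.1 (ih fun hz => hx (by rw [hz, hx₀, sub_zero]))
      linarith [norm_le_add_norm_add x h]
    · linarith [mem_closedBall_zero_iff.1 (ih hx₀), norm_nonneg h]

lemma norm_fwdDiff_iter_le_of_norm_iteratedDeriv_le {𝕜 E : Type*} [RCLike 𝕜]
    [NormedAddCommGroup E] [NormedSpace 𝕜 E] {N : ℕ} {g : 𝕜 → E} (hg : ContDiff 𝕜 N g) {M : ℝ}
    (hM : ∀ x, ‖iteratedDeriv N g x‖ ≤ M) (h x : 𝕜) :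
    ‖(fwdDiff h)^[N] g x‖ ≤ M * ‖h‖ ^ N := by
  induction N generalizing g M with
  | zero => simpa using hM x
  | succ N ih =>
    have hgN : ContDiff 𝕜 N g := hg.of_le (by exact_mod_cast N.le_succ)
    have hgh : ContDiff 𝕜 N fun y => g (y + h) := hgN.comp (contDiff_id.add contDiff_const)
    have deriv_diff (y : 𝕜) : iteratedDeriv N (fwdDiff h g) y =
        iteratedDeriv N g (y + h) - iteratedDeriv N g y := by
      rw [show fwdDiff h g = (fun y => g (y + h)) - g from rfl,
        iteratedDeriv_sub hgh.contDiffAt hgN.contDiffAt, iteratedDeriv_comp_add_const]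
    have mean_value (y : 𝕜) : ‖iteratedDeriv N (fwdDiff h g) y‖ ≤ M * ‖h‖ := by
      have hdiff := hg.differentiable_iteratedDeriv N (by exact_mod_cast N.lt_succ_self)
      simpa [deriv_diff] using convex_univ.norm_image_sub_le_of_norm_deriv_le
        (fun z _ => hdiff z) (fun z _ => by simpa only [← iteratedDeriv_succ] using hM z)
        (Set.mem_univ y) (Set.mem_univ (y + h))
    calc ‖(fwdDiff h)^[N + 1] g x‖ = ‖(fwdDiff h)^[N] (fwdDiff h g) x‖ := by
          rw [Function.iterate_succ_apply]
      _ ≤ M * ‖h‖ * ‖h‖ ^ N := ih (hgh.sub hgN) mean_value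
      _ = M * ‖h‖ ^ (N + 1) := by ring

lemma fwdDiff_iter_comp_addMonoidHom {A B G : Type*} [AddCommMonoid A] [AddCommMonoid B]
    [AddCommGroup G] (φ : A →+ B) (g : B → G) (h : A) (N : ℕ) :
    (fwdDiff h)^[N] (g ∘ φ) = (fwdDiff (φ h))^[N] g ∘ φ := by
  have hsemi : Function.Semiconj (· ∘ φ) (fwdDiff (φ h) : (B → G) → B → G) (fwdDiff h) :=
    fun g => by
      ext x
      simp [fwdDiff]
  exact (hsemi.iterate_right N g).symm

end ForwardDifference

section Sampling

variable {R τ : ℝ}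

lemma support_sample_subset_Icc {E : Type*} [Zero E] {g : ℝ → E} (hτ : 0 < τ)
    (hg : Function.support g ⊆ Metric.closedBall 0 R) :
    Function.support (fun m : ℤ => g (m * τ)) ⊆ Finset.Icc ⌈-(R / τ)⌉ ⌊R / τ⌋ := by
  intro m hm
  have hmR : |(m : ℝ) * τ| ≤ R := mem_closedBall_zero_iff.1 (hg hm)
  rw [Finset.mem_coe, Finset.mem_Icc, Int.ceil_le, Int.le_floor, le_div_iff₀ hτ, ← neg_div,
    div_le_iff₀ hτ]
  exact abs_le.1 hmR

lemma finite_support_sample {E : Type*} [Zero E] {g : ℝ → E} (hτ : 0 < τ)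
    (hg : HasCompactSupport g) : (Function.support fun m : ℤ => g (m * τ)).Finite := by
  obtain ⟨R, hR⟩ := hg.isCompact.isBounded.subset_closedBall (0 : ℝ)
  exact (Finset.finite_toSet _).subset
    (support_sample_subset_Icc hτ ((subset_tsupport g).trans hR))

lemma card_Icc_ceil_floor_le {x : ℝ} (hx : 0 ≤ x) :
    ((Finset.Icc ⌈-x⌉ ⌊x⌋).card : ℝ) ≤ 2 * x + 1 := by
  have hfloor : 0 ≤ ⌊x⌋ := Int.floor_nonneg.2 hx
  have hcard : ((Finset.Icc ⌈-x⌉ ⌊x⌋).card : ℤ) = ⌊x⌋ + 1 + ⌊x⌋ := by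
    rw [Int.ceil_neg, Int.card_Icc_of_le] <;> omega
  have hcard' : ((Finset.Icc ⌈-x⌉ ⌊x⌋).card : ℝ) = ⌊x⌋ + 1 + ⌊x⌋ := by exact_mod_cast hcard
  linarith [Int.floor_le x]

lemma mul_tsum_norm_sq_sample_le {E : Type*} [NormedAddCommGroup E] {g : ℝ → E} {M : ℝ}
    (hτ : 0 < τ) (hR : 0 ≤ R) (hg : Function.support g ⊆ Metric.closedBall 0 R)
    (hM : ∀ x, ‖g x‖ ≤ M) :
    τ * ∑' m : ℤ, ‖g (m * τ)‖ ^ 2 ≤ M ^ 2 * (2 * R + τ) := by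
  have hsum : ∑' m : ℤ, ‖g (m * τ)‖ ^ 2 =
      ∑ m ∈ Finset.Icc ⌈-(R / τ)⌉ ⌊R / τ⌋, ‖g (m * τ)‖ ^ 2 := tsum_eq_sum fun m hm => by
    have : g (m * τ) = 0 :=
      Function.notMem_support.1 fun h => hm (support_sample_subset_Icc hτ hg h)
    simp [this]
  calc τ * ∑' m : ℤ, ‖g (m * τ)‖ ^ 2
      ≤ τ * ∑ _m ∈ Finset.Icc ⌈-(R / τ)⌉ ⌊R / τ⌋, M ^ 2 := by
        rw [hsum]
        gcongr
        exact hM _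
    _ ≤ τ * ((2 * (R / τ) + 1) * M ^ 2) := by
        rw [Finset.sum_const, nsmul_eq_mul]
        gcongr
        exact card_Icc_ceil_floor_le (by positivity)
    _ = M ^ 2 * (2 * R + τ) := by field_simp

lemma exists_mul_tsum_norm_sq_fwdDiff_iter_sample_le {E : Type*} [NormedAddCommGroup E]
    [NormedSpace ℝ E] {g : ℝ → E} {N : ℕ} (hg : ContDiff ℝ N g) (hgc : HasCompactSupport g) :
    ∃ C, ∀ τ ∈ Set.Ioc (0 : ℝ) 1,
      τ * ∑' m : ℤ, (‖(fwdDiff (-1 : ℤ))^[N] (fun m : ℤ => g (m * τ)) m‖ / τ ^ N) ^ 2 ≤ C := by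
  obtain ⟨R, hR₀, hR⟩ := hgc.isCompact.isBounded.subset_closedBall_lt 0 (0 : ℝ)
  obtain ⟨M, hM⟩ := (hgc.iteratedFDeriv (𝕜 := ℝ) N).exists_bound_of_continuous
    (hg.continuous_iteratedFDeriv le_rfl)
  simp only [norm_iteratedFDeriv_eq_norm_iteratedDeriv] at hM
  refine ⟨M ^ 2 * (2 * (R + N) + 1), fun τ ⟨hτ₀, hτ₁⟩ => ?_⟩
  have hquot (x : ℝ) : ‖(τ ^ N)⁻¹ • (fwdDiff (-τ))^[N] g x‖ ≤ M := by
    rw [norm_smul, norm_inv, Real.norm_of_nonneg (by positivity), inv_mul_le_iff₀ (by positivity)]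
    simpa [abs_of_pos hτ₀, mul_comm] using
      norm_fwdDiff_iter_le_of_norm_iteratedDeriv_le hg hM (-τ) x
  have hsupp : Function.support (fun x => (τ ^ N)⁻¹ • (fwdDiff (-τ))^[N] g x) ⊆
      Metric.closedBall 0 (R + N * τ) :=
    (Function.support_const_smul_subset _ _).trans (by
      simpa [abs_of_pos hτ₀] using
        support_fwdDiff_iter_subset_closedBall ((subset_tsupport g).trans hR) (-τ) N)
  have hsample (m : ℤ) :
      (fwdDiff (-1 : ℤ))^[N] (fun m : ℤ => g (m * τ)) m = (fwdDiff (-τ))^[N] g (m * τ) := by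
    simpa [Function.comp_def] using congrFun (fwdDiff_iter_comp_addMonoidHom
      ((AddMonoidHom.mulRight τ).comp (Int.castAddHom ℝ)) g (-1) N) m
  calc τ * ∑' m : ℤ, (‖(fwdDiff (-1 : ℤ))^[N] (fun m : ℤ => g (m * τ)) m‖ / τ ^ N) ^ 2
      = τ * ∑' m : ℤ, ‖(τ ^ N)⁻¹ • (fwdDiff (-τ))^[N] g (m * τ)‖ ^ 2 := by
        simp only [hsample, norm_smul, norm_inv, norm_pow, Real.norm_of_nonneg hτ₀.le,
          div_eq_inv_mul]
    _ ≤ M ^ 2 * (2 * (R + N * τ) + τ) := mul_tsum_norm_sq_sample_le hτ₀ (by positivity) hsupp hquot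
    _ ≤ M ^ 2 * (2 * (R + N) + 1) := by
        gcongr
        exact mul_le_of_le_one_right N.cast_nonneg hτ₁

end Sampling

lemma integral_norm_sq_sum_fourier {T : ℝ} [Fact (0 < T)] (S : Finset ℤ) (c : ℤ → ℂ) :
    ∫ x : AddCircle T, ‖∑ m ∈ S, c m * fourier m x‖ ^ 2 ∂haarAddCircle = ∑ m ∈ S, ‖c m‖ ^ 2 := by
  let F : C(AddCircle T, ℂ) := ∑ m ∈ S, c m • fourier m
  have hF (x : AddCircle T) : F x = ∑ m ∈ S, c m * fourier m x := by
    simp [F, ContinuousMap.sum_apply]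
  have hcoeff (n : ℤ) : fourierCoeff F n = if n ∈ S then c n else 0 := by
    have hFsum : ⇑F = ∑ m ∈ S, c m • ⇑(fourier m : C(AddCircle T, ℂ)) := by
      ext x
      simp [F, ContinuousMap.sum_apply]
    rw [hFsum, fourierCoeff.sum S _ fun m _ =>
      ((fourier m).continuous.const_smul (c m)).integrable_of_hasCompactSupport
        (HasCompactSupport.of_compactSpace _), Finset.sum_apply]
    simp [fourierCoeff.const_smul, fourierCoeff_fourier, Pi.single_apply]
  have hLp : ⇑(ContinuousMap.toLp (E := ℂ) 2 haarAddCircle ℂ F) =ᵐ[haarAddCircle] F :=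
    ContinuousMap.coeFn_toLp haarAddCircle F
  calc ∫ x : AddCircle T, ‖∑ m ∈ S, c m * fourier m x‖ ^ 2 ∂haarAddCircle
      = ∫ x, ‖ContinuousMap.toLp (E := ℂ) 2 haarAddCircle ℂ F x‖ ^ 2 ∂haarAddCircle :=
        integral_congr_ae (hLp.mono fun x hx => by simp only [hx, hF])
    _ = ∑' n : ℤ, ‖fourierCoeff F n‖ ^ 2 := by
        simp only [← tsum_sq_fourierCoeff, fourierCoeff_toLp]
    _ = ∑ m ∈ S, ‖c m‖ ^ 2 := by
        rw [tsum_eq_sum fun n hn => by rw [hcoeff, if_neg hn, norm_zero, zero_pow two_ne_zero]]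
        exact Finset.sum_congr rfl fun n hn => by rw [hcoeff, if_pos hn]

section DiscreteFourierTransform

/-- The temporal transform `τ ∑ₘ cₘ e^{imτσ}` of a sequence of step size `τ`. It occurs in `XdNorm`
with `c m` the `k`-th Fourier coefficient of the `m`-th function, and is only meaningful for
summable `c`. -/
def discreteFT (τ : ℝ) (c : ℤ → ℂ) (σ : ℝ) : ℂ :=
  (τ : ℂ) * ∑' m : ℤ, c m * Complex.exp (Complex.I * m * τ * σ)

variable {τ : ℝ} {c : ℤ → ℂ}

lemma discreteFT_const_mul (τ : ℝ) (z : ℂ) (c : ℤ → ℂ) (σ : ℝ) :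
    discreteFT τ (fun m => z * c m) σ = z * discreteFT τ c σ := by
  simp only [discreteFT, mul_assoc, tsum_mul_left]
  ring

lemma discreteFT_exp_mul (τ a : ℝ) (c : ℤ → ℂ) (σ : ℝ) :
    discreteFT τ (fun m => Complex.exp (-Complex.I * m * τ * a) * c m) σ =
      discreteFT τ c (σ - a) := by
  refine congrArg ((τ : ℂ) * ·) (tsum_congr fun m => ?_)
  rw [mul_right_comm, ← Complex.exp_add, mul_comm]
  congr 2
  push_cast
  ring

lemma discreteFT_eq_sum (hc : c.support.Finite) (τ σ : ℝ) :
    discreteFT τ c σ =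
      τ * ∑ m ∈ hc.toFinset, c m * Complex.exp (Complex.I * m * τ * σ) := by
  rw [discreteFT, tsum_eq_sum fun m hm => ?_]
  rw [Function.notMem_support.1 (mt hc.mem_toFinset.2 hm), zero_mul]

lemma continuous_discreteFT (hc : c.support.Finite) (τ : ℝ) : Continuous (discreteFT τ c) := by
  simp only [funext (discreteFT_eq_sum hc τ)]
  fun_prop

lemma integral_norm_sq_discreteFT (hτ : 0 < τ) (hc : c.support.Finite) :
    ∫ σ in Set.Ioc (-(Real.pi / τ)) (Real.pi / τ), ‖discreteFT τ c σ‖ ^ 2 =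
      2 * Real.pi * (τ * ∑' m : ℤ, ‖c m‖ ^ 2) := by
  have : Fact (0 < 2 * Real.pi / τ) := ⟨by positivity⟩
  have hfourier (m : ℤ) (σ : ℝ) : fourier m (σ : AddCircle (2 * Real.pi / τ)) =
      Complex.exp (Complex.I * m * τ * σ) := by
    rw [fourier_coe_apply]
    congr 1
    push_cast
    field_simp
  have hperiod : Real.pi / τ = -(Real.pi / τ) + 2 * Real.pi / τ := by ring
  have hparseval := integral_norm_sq_sum_fourier (T := 2 * Real.pi / τ) hc.toFinset c
  rw [integral_haarAddCircle, ← AddCircle.integral_preimage _ (-(Real.pi / τ)), ← hperiod,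
    smul_eq_mul, inv_mul_eq_iff_eq_mul₀ (by positivity)] at hparseval
  simp only [hfourier] at hparseval
  have htsum : ∑' m : ℤ, ‖c m‖ ^ 2 = ∑ m ∈ hc.toFinset, ‖c m‖ ^ 2 := tsum_eq_sum fun m hm => by
    rw [Function.notMem_support.1 (mt hc.mem_toFinset.2 hm), norm_zero, zero_pow two_ne_zero]
  simp only [discreteFT_eq_sum hc, norm_mul, mul_pow, Complex.norm_real, Real.norm_eq_abs, sq_abs,
    integral_const_mul, hparseval, htsum]
  field_simp

lemma integral_norm_sq_discreteFT_sub (hτ : 0 < τ) (hc : c.support.Finite) (a : ℝ) :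
    ∫ σ in Set.Ioc (-(Real.pi / τ)) (Real.pi / τ), ‖discreteFT τ c (σ - a)‖ ^ 2 =
      2 * Real.pi * (τ * ∑' m : ℤ, ‖c m‖ ^ 2) := by
  have hphase (m : ℤ) : ‖Complex.exp (-Complex.I * m * τ * a)‖ = 1 := by
    rw [show -Complex.I * m * τ * a = ((-(m * τ * a) : ℝ) : ℂ) * Complex.I by push_cast; ring,
      Complex.norm_exp_ofReal_mul_I]
  simp only [← discreteFT_exp_mul]
  rw [integral_norm_sq_discreteFT hτ
    (hc.subset (Function.support_mul_subset_right _ _))]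
  simp only [norm_mul, hphase, one_mul]

lemma finite_support_fwdDiff_iter (hc : c.support.Finite) (h : ℤ) (N : ℕ) :
    ((fwdDiff h)^[N] c).support.Finite := by
  obtain ⟨R, hR⟩ := hc.isBounded.subset_closedBall 0
  exact (isCompact_closedBall _ _).finite_of_discrete.subset
    (support_fwdDiff_iter_subset_closedBall hR h N)

lemma dtau_mul_discreteFT (hc : c.support.Finite) (τ σ : ℝ) :
    dtau τ σ * discreteFT τ c σ = discreteFT τ (fwdDiff (-1) c) σ / τ := by
  set e : ℤ → ℂ := fun m => Complex.exp (Complex.I * m * τ * σ) with he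
  have he_shift (m : ℤ) : e m = Complex.exp (Complex.I * τ * σ) * e (m - 1) := by
    simp only [he, ← Complex.exp_add]
    congr 1
    push_cast
    ring
  have hsum : Summable fun m => c m * e m :=
    summable_of_hasFiniteSupport (hc.subset (Function.support_mul_subset_left _ _))
  have hterm (m : ℤ) : fwdDiff (-1) c m * e m =
      Complex.exp (Complex.I * τ * σ) * (c (m - 1) * e (m - 1)) - c m * e m := by
    rw [fwdDiff, ← sub_eq_add_neg, sub_mul, he_shift]
    ring
  have hshift : ∑' m, c (m - 1) * e (m - 1) = ∑' m, c m * e m :=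
    (Equiv.subRight (1 : ℤ)).tsum_eq fun m => c m * e m
  have hsum_shift : Summable fun m => c (m - 1) * e (m - 1) :=
    (Equiv.subRight (1 : ℤ)).summable_iff.2 hsum
  have hdiff : ∑' m, fwdDiff (-1) c m * e m =
      (Complex.exp (Complex.I * τ * σ) - 1) * ∑' m, c m * e m := by
    rw [tsum_congr hterm, (hsum_shift.mul_left _).tsum_sub hsum, tsum_mul_left, hshift]
    ring
  rw [dtau, discreteFT, discreteFT, hdiff]
  ring

lemma dtau_pow_mul_discreteFT (hc : c.support.Finite) (τ σ : ℝ) (N : ℕ) :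
    dtau τ σ ^ N * discreteFT τ c σ = discreteFT τ ((fwdDiff (-1))^[N] c) σ / τ ^ N := by
  induction N with
  | zero => simp
  | succ N ih =>
    rw [pow_succ', mul_assoc, ih, mul_div_assoc',
      dtau_mul_discreteFT (finite_support_fwdDiff_iter hc (-1) N), Function.iterate_succ_apply',
      div_div, pow_succ']

end DiscreteFourierTransform

lemma one_le_jbr (x : ℝ) : 1 ≤ jbr x :=
  Real.one_le_sqrt.2 (le_add_of_nonneg_right (sq_nonneg x))

lemma jbr_rpow_nonneg (x p : ℝ) : 0 ≤ jbr x ^ p :=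
  Real.rpow_nonneg (Real.sqrt_nonneg _) p

lemma jbr_rpow_two_mul_le {b : ℝ} {N : ℕ} (hb : b ≤ N) (x : ℝ) :
    jbr x ^ (2 * b) ≤ 2 ^ (N - 1) * (1 + (x ^ N) ^ 2) :=
  calc jbr x ^ (2 * b) ≤ jbr x ^ ((2 * N : ℕ) : ℝ) :=
        Real.rpow_le_rpow_of_exponent_le (one_le_jbr x) (by push_cast; linarith)
    _ = (1 + x ^ 2) ^ N := by
        rw [Real.rpow_natCast, pow_mul, jbr, Real.sq_sqrt (by positivity)]
    _ ≤ 2 ^ (N - 1) * (1 ^ N + (x ^ 2) ^ N) := add_pow_le zero_le_one (sq_nonneg x) N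
    _ = 2 ^ (N - 1) * (1 + (x ^ N) ^ 2) := by rw [one_pow, pow_right_comm]

section ModulationDensity

/-- The energy density at temporal frequency `σ` of a sequence of step size `τ`, weighted by the
power `2b` of the Japanese bracket of the modulation `d_τ(σ)`. The `k`-th mode contributes its
translate by `k²` to `XdNorm`. -/
def modulationDensity (τ b : ℝ) (c : ℤ → ℂ) (σ : ℝ) : ℝ :=
  jbr ‖dtau τ σ‖ ^ (2 * b) * ‖discreteFT τ c σ‖ ^ 2

variable {τ b : ℝ} {c : ℤ → ℂ} {N : ℕ}

lemma modulationDensity_nonneg (τ b : ℝ) (c : ℤ → ℂ) (σ : ℝ) : 0 ≤ modulationDensity τ b c σ :=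
  mul_nonneg (jbr_rpow_nonneg _ _) (sq_nonneg _)

lemma continuous_modulationDensity (hc : c.support.Finite) (τ b : ℝ) :
    Continuous (modulationDensity τ b c) := by
  have hjbr : Continuous fun σ => jbr ‖dtau τ σ‖ := by
    unfold jbr dtau
    fun_prop
  have hweight : Continuous fun σ => jbr ‖dtau τ σ‖ ^ (2 * b) :=
    hjbr.rpow_const fun σ => Or.inl (zero_lt_one.trans_le (one_le_jbr _)).ne'
  exact hweight.mul ((continuous_discreteFT hc τ).norm.pow 2)

lemma modulationDensity_le (hc : c.support.Finite) (hb : b ≤ N) (τ σ : ℝ) :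
    modulationDensity τ b c σ ≤
      2 ^ (N - 1) * (‖discreteFT τ c σ‖ ^ 2 +
        ‖discreteFT τ (fun m => (fwdDiff (-1))^[N] c m / τ ^ N) σ‖ ^ 2) := by
  have hquot : discreteFT τ (fun m => (fwdDiff (-1))^[N] c m / τ ^ N) σ =
      dtau τ σ ^ N * discreteFT τ c σ := by
    simp only [dtau_pow_mul_discreteFT hc, div_eq_inv_mul, discreteFT_const_mul]
  calc modulationDensity τ b c σ
      ≤ 2 ^ (N - 1) * (1 + (‖dtau τ σ‖ ^ N) ^ 2) * ‖discreteFT τ c σ‖ ^ 2 := by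
        unfold modulationDensity
        gcongr
        exact jbr_rpow_two_mul_le hb _
    _ = _ := by
        rw [hquot, norm_mul, norm_pow]
        ring

lemma integral_modulationDensity_sub_le (hτ : 0 < τ) (hc : c.support.Finite) (hb : b ≤ N) (a : ℝ) :
    ∫ σ in Set.Ioc (-(Real.pi / τ)) (Real.pi / τ), modulationDensity τ b c (σ - a) ≤
      2 ^ (N - 1) * (2 * Real.pi) * (τ * ∑' m : ℤ, ‖c m‖ ^ 2 +
        τ * ∑' m : ℤ, (‖(fwdDiff (-1))^[N] c m‖ / τ ^ N) ^ 2) := by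
  have hd : (Function.support fun m => (fwdDiff (-1))^[N] c m / (τ : ℂ) ^ N).Finite :=
    (finite_support_fwdDiff_iter hc (-1) N).subset fun m hm h0 => hm (by simp only [h0, zero_div])
  have hint {d : ℤ → ℂ} (hd : d.support.Finite) :
      IntegrableOn (fun σ => ‖discreteFT τ d (σ - a)‖ ^ 2)
        (Set.Ioc (-(Real.pi / τ)) (Real.pi / τ)) :=
    (((continuous_discreteFT hd τ).comp (continuous_sub_right a)).norm.pow 2).integrableOn_Ioc
  have hint_density : IntegrableOn (fun σ => modulationDensity τ b c (σ - a))
      (Set.Ioc (-(Real.pi / τ)) (Real.pi / τ)) :=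
    ((continuous_modulationDensity hc τ b).comp (continuous_sub_right a)).integrableOn_Ioc
  refine (setIntegral_mono hint_density (((hint hc).add (hint hd)).const_mul _) fun σ =>
    modulationDensity_le hc hb τ (σ - a)).trans_eq ?_
  simp only [Pi.add_apply]
  rw [integral_const_mul, integral_add (hint hc) (hint hd), integral_norm_sq_discreteFT_sub hτ hc,
    integral_norm_sq_discreteFT_sub hτ hd]
  simp only [norm_div, norm_pow, Complex.norm_real, Real.norm_of_nonneg hτ.le]
  ring

lemma exists_integral_modulationDensity_sample_sub_le {η : ℝ → ℂ} (hη : ContDiff ℝ N η)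
    (hηc : HasCompactSupport η) (hb : b ≤ N) :
    ∃ C > 0, ∀ τ ∈ Set.Ioc (0 : ℝ) 1, ∀ a : ℝ,
      ∫ σ in Set.Ioc (-(Real.pi / τ)) (Real.pi / τ),
        modulationDensity τ b (fun m => η (m * τ)) (σ - a) ≤ C := by
  obtain ⟨C₀, hC₀⟩ := exists_mul_tsum_norm_sq_fwdDiff_iter_sample_le (N := 0)
    (hη.of_le (by simp)) hηc
  obtain ⟨C₁, hC₁⟩ := exists_mul_tsum_norm_sq_fwdDiff_iter_sample_le hη hηc
  simp only [Function.iterate_zero, id_eq, pow_zero, div_one] at hC₀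
  refine ⟨max (2 ^ (N - 1) * (2 * Real.pi) * (C₀ + C₁)) 1, by positivity, fun τ hτ a => ?_⟩
  refine le_max_of_le_left ((integral_modulationDensity_sub_le hτ.1
    (finite_support_sample hτ.1 hηc) hb a).trans ?_)
  gcongr
  exacts [hC₀ τ hτ, hC₁ τ hτ]

end ModulationDensity

lemma integral_tsum_le_tsum_of_integral_le {α ι : Type*} [MeasurableSpace α] [Countable ι]
    {μ : Measure α} {F : ι → α → ℝ} {B : ι → ℝ} (hF₀ : ∀ i x, 0 ≤ F i x)
    (hF : ∀ i, Integrable (F i) μ) (hFB : ∀ i, ∫ x, F i x ∂μ ≤ B i) (hB : Summable B) :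
    ∫ x, ∑' i, F i x ∂μ ≤ ∑' i, B i := by
  have hsum : Summable fun i => ∫ x, F i x ∂μ :=
    hB.of_nonneg_of_le (fun i => integral_nonneg (hF₀ i)) hFB
  rw [← integral_tsum_of_summable_integral_norm hF
    (by simpa only [Real.norm_of_nonneg (hF₀ _ _)] using hsum)]
  exact hsum.tsum_le_tsum hFB hB

lemma discreteFT_free_evolution (η : ℝ → ℂ) (τ : ℝ) (z : ℂ) (k : ℤ) (σ : ℝ) :
    discreteFT τ (fun m => η (m * τ) *
        Complex.exp (-Complex.I * Complex.ofReal (m * τ) * (k : ℂ) ^ 2) * z) σ =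
      z * discreteFT τ (fun m => η (m * τ)) (σ - (k : ℝ) ^ 2) := by
  rw [← discreteFT_exp_mul, ← discreteFT_const_mul]
  congr 1
  ext m
  push_cast
  ring_nf

lemma XdNorm_free_evolution {η : ℝ → ℂ} {τ : ℝ} {f : Torus → ℂ} {v : ℤ → Torus → ℂ}
    (hv : ∀ n k : ℤ, fourierCoeff (v n) k = η (n * τ) *
      Complex.exp (-Complex.I * Complex.ofReal (n * τ) * (k : ℂ) ^ 2) * fourierCoeff f k)
    (s b : ℝ) :
    XdNorm τ s b v = Real.sqrt (∫ σ in Set.Ioc (-(Real.pi / τ)) (Real.pi / τ),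
      ∑' k : ℤ, jbr k ^ (2 * s) * ‖fourierCoeff f k‖ ^ 2 *
        modulationDensity τ b (fun m => η (m * τ)) (σ - (k : ℝ) ^ 2)) := by
  have hmode (σ : ℝ) (k : ℤ) : discreteFT τ (fun m => fourierCoeff (v m) k) σ =
      fourierCoeff f k * discreteFT τ (fun m => η (m * τ)) (σ - (k : ℝ) ^ 2) := by
    simp only [hv, discreteFT_free_evolution]
  have hterm (σ : ℝ) (k : ℤ) :
      jbr k ^ (2 * s) * jbr ‖dtau τ (σ - (k : ℝ) ^ 2)‖ ^ (2 * b) *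
          ‖discreteFT τ (fun m => fourierCoeff (v m) k) σ‖ ^ 2 =
        jbr k ^ (2 * s) * ‖fourierCoeff f k‖ ^ 2 *
          modulationDensity τ b (fun m => η (m * τ)) (σ - (k : ℝ) ^ 2) := by
    rw [hmode, norm_mul, modulationDensity]
    ring
  simp only [← hterm, XdNorm, discreteFT]

theorem discrete_bourgain_free_evolution_general {η : ℝ → ℂ} {N : ℕ} (hη : ContDiff ℝ N η)
    (hηc : HasCompactSupport η) (s : ℝ) {b : ℝ} (hb : b ≤ N) :
    ∃ C > (0 : ℝ), ∀ τ ∈ Set.Ioc (0 : ℝ) 1, ∀ f : Torus → ℂ,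
      (Summable fun k : ℤ => jbr k ^ (2 * s) * ‖fourierCoeff f k‖ ^ 2) →
      ∀ v : ℤ → Torus → ℂ,
        (∀ n k : ℤ, fourierCoeff (v n) k = η (n * τ) *
          Complex.exp (-Complex.I * Complex.ofReal (n * τ) * (k : ℂ) ^ 2) * fourierCoeff f k) →
        XdNorm τ s b v ≤ C * hsNorm s f := by
  obtain ⟨C, hC₀, hC⟩ := exists_integral_modulationDensity_sample_sub_le hη hηc hb
  refine ⟨Real.sqrt C, Real.sqrt_pos.2 hC₀, fun τ hτ f hf v hv => ?_⟩
  have hcoeff (k : ℤ) : 0 ≤ jbr k ^ (2 * s) * ‖fourierCoeff f k‖ ^ 2 :=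
    mul_nonneg (jbr_rpow_nonneg _ _) (sq_nonneg _)
  have hcont : Continuous (modulationDensity τ b fun m => η (m * τ)) :=
    continuous_modulationDensity (finite_support_sample hτ.1 hηc) τ b
  rw [XdNorm_free_evolution hv, hsNorm, ← Real.sqrt_mul hC₀.le, ← tsum_mul_left]
  refine Real.sqrt_le_sqrt (integral_tsum_le_tsum_of_integral_le
    (fun k σ => mul_nonneg (hcoeff k) (modulationDensity_nonneg ..)) (fun k => ?integrable)
    (fun k => ?mode_bound) (hf.mul_left C))
  case integrable =>
    exact (continuous_const.mul (hcont.comp (continuous_sub_right _))).integrableOn_Ioc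
  case mode_bound =>
    rw [integral_const_mul, mul_comm C]
    exact mul_le_mul_of_nonneg_left (hC τ hτ _) (hcoeff k)

/-- Uniform bound `‖(η(nτ) e^{inτ∂_x²} f)_n‖_{X^{s,b}_τ} ≲ ‖f‖_{H^s}`.
The sequence `(η(nτ) e^{inτ∂_x²} f)_n` is described through its Fourier coefficients
`η(nτ) e^{-inτk²} f̂(k)`. -/
theorem discrete_bourgain_free_evolution (η : ℝ → ℝ) (hη : ContDiff ℝ (⊤ : ℕ∞) η)
    (hηc : HasCompactSupport η) (s b : ℝ) :
    ∃ C > (0 : ℝ), ∀ τ ∈ Set.Ioc (0 : ℝ) 1, ∀ f : Torus → ℂ, InHs s f →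
      ∀ v : ℤ → Torus → ℂ, {n : ℤ | v n ≠ 0}.Finite →
        (∀ (n : ℤ) (k : ℤ), fourierCoeff (v n) k
            = (η ((n : ℝ) * τ) : ℂ)
                * Complex.exp (-Complex.I * Complex.ofReal ((n : ℝ) * τ) * (k : ℂ) ^ 2)
                * fourierCoeff f k) →
        XdNorm τ s b v ≤ C * hsNorm s f := by
  obtain ⟨N, hN⟩ := exists_nat_ge b
  obtain ⟨C, hC₀, hC⟩ := discrete_bourgain_free_evolution_general
    (ofRealCLM.contDiff.comp (hη.of_le (by exact_mod_cast le_top)))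
    (hηc.comp_left Complex.ofReal_zero) s hN
  exact ⟨C, hC₀, fun τ hτ f hf v _ hv => hC τ hτ f hf.2 v hv⟩
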